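/- Let N, m, m₀, σ₀ be positive integers and let σ be an integer with gcd(σ, m) = 1. Then there exist integers a, b, not both zero, such that a·N ≡ b·σ² (mod m), |a·N/σ₀| ≤ 2·(N·m·m₀)^{1/2}, and |b·σ₀ − a·N/σ₀| ≤ 2·(N·m/m₀)^{1/2}, where the two inequalities are inequalities of real numbers. -/

import Mathlib

/-!
The integer solutions `x` of a linear congruence modulo `m` form a subgroup of `ℤ ^ ι` of index
dividing `m`. Minkowski's convex body theorem for `ℤ ^ ι`, transported to such a subgroup by the
matrix of a basis (whose determinant is the index up to sign), gives a nonzero solution on which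
each of a system of linear forms is at most a prescribed bound, as soon as the product of the bounds
is at least `m` times the absolute determinant of the forms. For the forms `aN / σ₀` and
`bσ₀ - aN / σ₀` the determinant is `N`, and the product of the bounds `√(N m m₀)` and `√(N m / m₀)`
is exactly `N m`, so the constant `2` can even be lowered to `1`.
-/

open MeasureTheory Module Matrix

theorem isCompact_preimage_of_det_ne_zero {E : Type*} [NormedAddCommGroup E] [NormedSpace ℝ E]
    [FiniteDimensional ℝ E] {f : E →ₗ[ℝ] E} (hf : LinearMap.det f ≠ 0) {s : Set E}
    (hs : IsCompact s) : IsCompact (f ⁻¹' s) :=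
  (f.equivOfDetNeZero hf).toContinuousLinearEquiv.toHomeomorph.isCompact_preimage.2 hs

theorem sqrt_mul_mul_sqrt_div {x y : ℝ} (hx : 0 ≤ x) (hy : 0 < y) : √(x * y) * √(x / y) = x := by
  rw [← Real.sqrt_mul (by positivity), Real.sqrt_eq_iff_mul_self_eq (by positivity) hx]
  field_simp

section LinearForms

variable {ι : Type*} [Fintype ι]

theorem exists_ne_zero_int_mem_of_two_pow_card_le_volume [Nonempty ι] {s : Set (ι → ℝ)}
    (h_symm : ∀ x ∈ s, -x ∈ s) (h_conv : Convex ℝ s) (h_cpt : IsCompact s)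
    (h : 2 ^ Fintype.card ι ≤ volume s) :
    ∃ x : ι → ℤ, x ≠ 0 ∧ (Int.cast ∘ x : ι → ℝ) ∈ s := by
  let b := Pi.basisFun ℝ ι
  have h_vol : volume (ZSpan.fundamentalDomain b) = 1 := by
    simp [b, ZSpan.fundamentalDomain_pi_basisFun, Real.volume_pi_Ico]
  have : Countable (Submodule.span ℤ (Set.range b)).toAddSubgroup :=
    inferInstanceAs (Countable (Submodule.span ℤ (Set.range b)))
  obtain ⟨⟨y, hy⟩, hy_ne, hys⟩ := exists_ne_zero_mem_lattice_of_measure_mul_two_pow_le_measure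
    (ZSpan.isAddFundamentalDomain' b volume) h_symm h_conv h_cpt (by simpa [h_vol] using h)
  choose x hx using (b.mem_span_iff_repr_mem ℤ y).1 hy
  obtain rfl : Int.cast ∘ x = y := funext hx
  refine ⟨x, ?_, hys⟩
  rintro rfl
  exact hy_ne (Subtype.ext (funext fun _ ↦ Int.cast_zero))

variable [DecidableEq ι]

theorem volume_preimage_toLin'_Icc_neg {A : Matrix ι ι ℝ} (hA : A.det ≠ 0) {c : ι → ℝ}
    (hc : 0 ≤ c) :
    volume (toLin' A ⁻¹' Set.Icc (-c) c) =
      ENNReal.ofReal (2 ^ Fintype.card ι * (|A.det|⁻¹ * ∏ i, c i)) := by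
  rw [Measure.addHaar_preimage_linearMap volume (by rwa [LinearMap.det_toLin']),
    LinearMap.det_toLin', Real.volume_Icc_pi,
    ← ENNReal.ofReal_prod_of_nonneg fun i _ ↦ by simpa using hc i,
    ← ENNReal.ofReal_mul (abs_nonneg _), abs_inv]
  simp only [Pi.neg_apply, sub_neg_eq_add, ← two_mul, Finset.prod_mul_distrib, Finset.prod_const,
    Finset.card_univ]
  ring_nf

theorem exists_ne_zero_int_abs_mulVec_le [Nonempty ι] {A : Matrix ι ι ℝ} (hA : A.det ≠ 0)
    {c : ι → ℝ} (hc : 0 ≤ c) (h : |A.det| ≤ ∏ i, c i) :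
    ∃ x : ι → ℤ, x ≠ 0 ∧ ∀ i, |(A *ᵥ (Int.cast ∘ x)) i| ≤ c i := by
  have h_vol : 2 ^ Fintype.card ι ≤ volume (toLin' A ⁻¹' Set.Icc (-c) c) := by
    rw [volume_preimage_toLin'_Icc_neg hA hc, ← ENNReal.ofReal_ofNat 2,
      ← ENNReal.ofReal_pow zero_le_two]
    refine ENNReal.ofReal_le_ofReal (le_mul_of_one_le_right (by positivity) ?_)
    rwa [inv_mul_eq_div, one_le_div (abs_pos.2 hA)]
  have h_symm : ∀ x ∈ toLin' A ⁻¹' Set.Icc (-c) c, -x ∈ toLin' A ⁻¹' Set.Icc (-c) c := by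
    rintro x ⟨h_lower, h_upper⟩
    rw [Set.mem_preimage, map_neg]
    exact ⟨neg_le_neg h_upper, neg_le.1 h_lower⟩
  obtain ⟨x, hx, h_lower, h_upper⟩ := exists_ne_zero_int_mem_of_two_pow_card_le_volume h_symm
    ((convex_Icc _ _).linear_preimage _)
    (isCompact_preimage_of_det_ne_zero (by rwa [LinearMap.det_toLin']) isCompact_Icc) h_vol
  exact ⟨x, hx, fun i ↦ abs_le.2 ⟨h_lower i, h_upper i⟩⟩

theorem exists_matrix_natAbs_det_eq_index_and_mulVec_mem (H : AddSubgroup (ι → ℤ)) [H.FiniteIndex] :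
    ∃ B : Matrix ι ι ℤ, B.det.natAbs = H.index ∧ ∀ x, B *ᵥ x ∈ H := by
  have h_rank : finrank ℤ H = Fintype.card ι := by
    rw [AddSubgroup.finrank_eq_of_finiteIndex, finrank_fintype_fun_eq_card]
  let b : Basis ι ℤ H := (finBasisOfFinrankEq ℤ H h_rank).reindex (Fintype.equivFin ι).symm
  refine ⟨(Matrix.of fun i ↦ (b i : ι → ℤ))ᵀ, ?_, fun x ↦ ?_⟩
  · rw [AddSubgroup.index_eq_natAbs_det (Pi.basisFun ℤ ι) H b, Pi.basisFun_det_apply, det_transpose]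
  · rw [mulVec_transpose, vecMul_eq_sum]
    exact sum_mem fun i _ ↦ zsmul_mem (b i).2 (x i)

theorem exists_ne_zero_mem_addSubgroup_abs_mulVec_le [Nonempty ι] (H : AddSubgroup (ι → ℤ))
    [H.FiniteIndex] {A : Matrix ι ι ℝ} (hA : A.det ≠ 0) {c : ι → ℝ} (hc : 0 ≤ c)
    (h : |A.det| * H.index ≤ ∏ i, c i) :
    ∃ x ∈ H, x ≠ 0 ∧ ∀ i, |(A *ᵥ (Int.cast ∘ x)) i| ≤ c i := by
  obtain ⟨B, hB_det, hB_mem⟩ := exists_matrix_natAbs_det_eq_index_and_mulVec_mem H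
  have hB : B.det ≠ 0 := Int.natAbs_ne_zero.1 (hB_det ▸ AddSubgroup.FiniteIndex.index_ne_zero)
  have h_det : (A * B.map Int.cast).det = A.det * B.det := by
    rw [det_mul, ← Int.cast_det]
  obtain ⟨y, hy, hyc⟩ := exists_ne_zero_int_abs_mulVec_le
    (h_det ▸ mul_ne_zero hA (Int.cast_ne_zero.2 hB)) hc
    (by rwa [h_det, abs_mul, ← Int.cast_abs, ← Nat.cast_natAbs, hB_det])
  refine ⟨B *ᵥ y, hB_mem y, fun h_zero ↦ hy (eq_zero_of_mulVec_eq_zero hB h_zero), fun i ↦ ?_⟩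
  have h_cast : (Int.cast ∘ (B *ᵥ y) : ι → ℝ) = B.map Int.cast *ᵥ (Int.cast ∘ y) :=
    funext (RingHom.map_mulVec (Int.castRingHom ℝ) B y)
  rw [h_cast, mulVec_mulVec]
  exact hyc i

end LinearForms

/-- The lattice of integer solutions `x` of the linear congruence `∑ i, x i * v i ≡ 0 (mod m)`,
encoded as the kernel of a homomorphism to `ZMod m` so that its index can be read off. -/
def congruenceLattice {ι : Type*} [Fintype ι] (m : ℕ) (v : ι → ℤ) : AddSubgroup (ι → ℤ) :=
  ((Int.castAddHom (ZMod m)).comp (Fintype.linearCombination ℤ v).toAddMonoidHom).ker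

namespace congruenceLattice

variable {ι : Type*} [Fintype ι] {m : ℕ} {v : ι → ℤ}

theorem mem_iff {x : ι → ℤ} : x ∈ congruenceLattice m v ↔ (m : ℤ) ∣ ∑ i, x i * v i :=
  ZMod.intCast_zmod_eq_zero_iff_dvd _ _

theorem index_dvd : (congruenceLattice m v).index ∣ m := by
  rw [congruenceLattice, AddSubgroup.index_ker]
  simpa only [Nat.card_zmod] using AddSubgroup.card_addSubgroup_dvd_card
    ((Int.castAddHom (ZMod m)).comp (Fintype.linearCombination ℤ v).toAddMonoidHom).range

theorem exists_ne_zero_mem_abs_mulVec_le [DecidableEq ι] [Nonempty ι] (hm : m ≠ 0)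
    {A : Matrix ι ι ℝ} (hA : A.det ≠ 0) {c : ι → ℝ} (hc : 0 ≤ c) (h : |A.det| * m ≤ ∏ i, c i) :
    ∃ x ∈ congruenceLattice m v, x ≠ 0 ∧ ∀ i, |(A *ᵥ (Int.cast ∘ x)) i| ≤ c i := by
  have h_index : (congruenceLattice m v).index ≤ m :=
    Nat.le_of_dvd (Nat.pos_of_ne_zero hm) index_dvd
  have : (congruenceLattice m v).FiniteIndex := ⟨ne_zero_of_dvd_ne_zero hm index_dvd⟩
  exact exists_ne_zero_mem_addSubgroup_abs_mulVec_le _ hA hc (h.trans' (by gcongr))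

end congruenceLattice

theorem stmt_1_general (N m : ℕ) (t : ℤ) (m₀ σ₀ : ℝ) (hN : 0 < N) (hm : 0 < m) (hm₀ : 0 < m₀)
    (hσ₀ : σ₀ ≠ 0) :
    ∃ a b : ℤ, ¬ (a = 0 ∧ b = 0) ∧
      Int.ModEq (m : ℤ) (a * N) (b * t) ∧
      |a * N / σ₀| ≤ Real.sqrt (N * m * m₀) ∧
      |b * σ₀ - a * N / σ₀| ≤ Real.sqrt (N * m / m₀) := by
  let A : Matrix (Fin 2) (Fin 2) ℝ := !![N / σ₀, 0; -(N / σ₀), σ₀]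
  let c : Fin 2 → ℝ := ![Real.sqrt (N * m * m₀), Real.sqrt (N * m / m₀)]
  have hA : A.det = N := by simp [A, det_fin_two_of, hσ₀]
  have hc : ∏ i, c i = N * m := by
    rw [Fin.prod_univ_two]
    exact sqrt_mul_mul_sqrt_div (by positivity) hm₀
  obtain ⟨x, hx_mem, hx, hxc⟩ := congruenceLattice.exists_ne_zero_mem_abs_mulVec_le
    (v := ![-(N : ℤ), t]) hm.ne' (A := A) (by rw [hA]; positivity)
    (c := c) (by simp [c, Pi.le_def, Fin.forall_fin_two]) (by rw [hA, hc, Nat.abs_cast])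
  have h_fst : (A *ᵥ (Int.cast ∘ x)) 0 = x 0 * N / σ₀ := by
    simp only [A, mulVec, dotProduct, Fin.sum_univ_two, of_apply, cons_val, Function.comp_apply]
    ring
  have h_snd : (A *ᵥ (Int.cast ∘ x)) 1 = x 1 * σ₀ - x 0 * N / σ₀ := by
    simp only [A, mulVec, dotProduct, Fin.sum_univ_two, of_apply, cons_val, Function.comp_apply]
    ring
  have h_mod : x 0 * N ≡ x 1 * t [ZMOD m] := by
    have h_dvd := congruenceLattice.mem_iff.1 hx_mem
    simp only [Fin.sum_univ_two, cons_val] at h_dvd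
    exact Int.modEq_iff_dvd.2 (by rwa [sub_eq_neg_add, ← mul_neg])
  exact ⟨x 0, x 1, fun ⟨h₀, h₁⟩ ↦ hx (funext (Fin.forall_fin_two.2 ⟨h₀, h₁⟩)), h_mod,
    h_fst ▸ hxc 0, h_snd ▸ hxc 1⟩

/-- Existence of a short nonzero vector in the lattice of solutions of
`a·N ≡ b·σ² (mod m)`. -/
theorem stmt_1
    (N m m₀ σ₀ : ℕ) (σ : ℤ)
    (hN : 0 < N) (hm : 0 < m) (hm₀ : 0 < m₀) (hσ₀ : 0 < σ₀)
    (hσcop : IsCoprime σ (m : ℤ)) :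
    ∃ a b : ℤ, ¬ (a = 0 ∧ b = 0) ∧
      Int.ModEq (m : ℤ) (a * N) (b * σ ^ 2) ∧
      |(a : ℝ) * N / σ₀| ≤ 2 * Real.sqrt ((N : ℝ) * m * m₀) ∧
      |(b : ℝ) * σ₀ - (a : ℝ) * N / σ₀| ≤ 2 * Real.sqrt ((N : ℝ) * m / m₀) := by
  obtain ⟨a, b, hab, h_mod, ha, hb⟩ :=
    stmt_1_general N m (σ ^ 2) m₀ σ₀ hN hm (by positivity) (by positivity)
  exact ⟨a, b, hab, h_mod, by linarith [abs_nonneg (a * N / σ₀ : ℝ)],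
    by linarith [abs_nonneg (b * σ₀ - a * N / σ₀ : ℝ)]⟩
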